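/- Let x₀ be a state, ℓ₁,…,ℓₙ be labels, y₀ = σ(x₀), xᵢ = next(xᵢ₋₁, ℓᵢ) for i = 1,…,n, and yᵢ = terminal(yᵢ₋₁, α(yᵢ₋₁, ℓᵢ)) for i = 1,…,n. If σ'(next(x,ℓ)) ≅ terminal(σ'(x), α(σ'(x),ℓ)) for every state x, every label ℓ, and every state mapping σ' congruent to σ, then yᵢ ≅ σ(xᵢ) for all i = 1,…,n. -/

import Mathlib

/-- If `σ' (next x ℓ) ≅ terminal (σ' x) (α (σ' x) ℓ)` for every state `x`,
label `ℓ`, and state mapping `σ'` congruent to `σ`, then along any trace we have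
`yᵢ ≅ σ xᵢ` for all `i`. -/
theorem stmt_1 {S T L M : Type*}
    (next : S → L → S) (α : T → L → M) (terminal : T → M → T) (σ : S → T)
    (cong : T → T → Prop) (hcong : Equivalence cong)
    (n : ℕ) (ℓ : Fin n → L) (x : Fin (n + 1) → S) (y : Fin (n + 1) → T)
    (hy0 : y 0 = σ (x 0))
    (hx : ∀ i : Fin n, x i.succ = next (x i.castSucc) (ℓ i))
    (hy : ∀ i : Fin n, y i.succ = terminal (y i.castSucc) (α (y i.castSucc) (ℓ i)))
    (h : ∀ σ' : S → T, (∀ s : S, cong (σ' s) (σ s)) →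
      ∀ (s : S) (l : L), cong (σ' (next s l)) (terminal (σ' s) (α (σ' s) l))) :
    ∀ i : Fin (n + 1), cong (y i) (σ (x i)) := by
  classical
  intro i
  induction i using Fin.induction with
  | zero => rw [hy0]; exact hcong.refl _
  | succ i ih =>
    have hc : ∀ s, cong (Function.update σ (x i.castSucc) (y i.castSucc) s) (σ s) := by
      intro s
      by_cases hs : s = x i.castSucc
      · subst hs
        rw [Function.update_self]
        exact ih
      · rw [Function.update_of_ne hs]
        exact hcong.refl _
    have h1 := h _ hc (x i.castSucc) (ℓ i)
    have h2 := hc (next (x i.castSucc) (ℓ i))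
    rw [Function.update_self] at h1
    rw [hx, hy]
    exact hcong.trans (hcong.symm h1) h2
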